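/- Let C ⊆ ℝ^m be a convex set with nonempty interior and vertex 0 (i.e., 0 ∈ C and C is star-shaped cone-generating), and let F : C → ℝ^n be Lipschitz with F(0) = 0 and Gâteaux differentiable at 0 along admissible directions of C with derivative dF(0). If dF(0) maps the convex cone generated by C onto all of ℝ^n, then for every neighborhood V of 0 in ℝ^m, the point 0 lies in the interior of F(V ∩ C). -/

import Mathlib

open Filter
open scoped NNReal

open MeasureTheory Metric Topology

lemma det_interp {E : Type*} [NormedAddCommGroup E] [NormedSpace ℝ E] [FiniteDimensional ℝ E]
    (s : Finset ℝ) (hs : Module.finrank ℝ E < s.card) (A : E →L[ℝ] E) :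
    (1 + A).det = ∑ t ∈ s, (Lagrange.basis s id t).eval 1 * (1 + t • A).det := by
  classical
  let b := Module.finBasis ℝ E
  let M := LinearMap.toMatrix b b (A : E →ₗ[ℝ] E)
  let p : Polynomial ℝ := ((Polynomial.X : Polynomial ℝ) • M.map Polynomial.C
    + (1 : Matrix _ _ ℝ).map Polynomial.C).det
  have hp : ∀ t : ℝ, p.eval t = (1 + t • A).det := by
    intro t
    have : (1 + t • A).det = (t • M + 1).det := by
      rw [ContinuousLinearMap.det, ← LinearMap.det_toMatrix b]
      congr 1
      have : ((1 + t • A : E →L[ℝ] E) : E →ₗ[ℝ] E) = t • (A : E →ₗ[ℝ] E) + LinearMap.id := by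
        ext x; simp [add_comm]
      rw [this, map_add, map_smul, LinearMap.toMatrix_id]
    rw [this]
    change Polynomial.evalRingHom t _ = _
    rw [RingHom.map_det]
    congr 1
    ext i j
    by_cases hij : i = j <;> simp [hij] <;> exact mul_comm _ _
  have hdeg : p.degree < s.card := by
    refine lt_of_le_of_lt Polynomial.degree_le_natDegree ?_
    have := Polynomial.natDegree_det_X_add_C_le M 1
    rw [Fintype.card_fin] at this
    exact_mod_cast this.trans_lt hs
  have := congrArg (Polynomial.eval 1) (Lagrange.eq_interpolate (v := id) Function.injective_id.injOn hdeg)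
  rw [hp, one_smul, Lagrange.interpolate_apply, Polynomial.eval_finsetSum] at this
  rw [this]
  refine Finset.sum_congr rfl fun t _ => ?_
  simp [hp, mul_comm]

section core
variable {E : Type*} [NormedAddCommGroup E] [NormedSpace ℝ E] [FiniteDimensional ℝ E]
  [MeasurableSpace E] [BorelSpace E] (μ : Measure E) [μ.IsAddHaarMeasure]

lemma core_small : ∃ c : ℝ≥0, 0 < c ∧ ∀ (L : ℝ≥0) (g : E → E) (B : Set E), L < c →
    LipschitzWith L g → MeasurableSet B → (∀ x ∉ B, g x = 0) →
    ∫ x in B, (1 + fderiv ℝ g x).det ∂μ = μ.real B := by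
  have h1 := addHaar_image_le_mul_of_det_lt μ (1 : E →L[ℝ] E) (m := 2) (by
    have : (1 : E →L[ℝ] E).det = 1 := by
      simp [ContinuousLinearMap.det]
    rw [this]; simp)
  have h2 : ∀ᶠ A in 𝓝 (1 : E →L[ℝ] E), 0 < A.det := by
    have hc : Continuous fun A : E →L[ℝ] E => A.det := ContinuousLinearMap.continuous_det
    refine hc.continuousAt.eventually (lt_mem_nhds ?_)
    simp [ContinuousLinearMap.det]
  obtain ⟨r, hr, hr2⟩ := Metric.eventually_nhds_iff.1 h2
  have h3 : ∀ᶠ δ : ℝ≥0 in 𝓝[>] 0, 0 < δ ∧ δ < 1 ∧ (δ : ℝ) < r := by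
    refine eventually_mem_nhdsWithin.and (nhdsWithin_le_nhds ?_)
    refine (gt_mem_nhds one_pos).and ?_
    exact NNReal.continuous_coe.continuousAt.eventually (gt_mem_nhds (by simpa using hr))
  obtain ⟨c, hc1, hc0, hc2, hc3⟩ := (h1.and h3).exists
  refine ⟨c, hc0, fun L g B hL hg hB hgB => ?_⟩
  set f : E → E := fun x => x + g x with hf
  have hfa : ∀ s, ApproximatesLinearOn f (1 : E →L[ℝ] E) s c := by
    intro s x _ y _
    have : f x - f y - (1 : E →L[ℝ] E) (x - y) = g x - g y := by
      simp [hf]; abel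
    rw [this]
    refine (hg.norm_sub_le x y).trans ?_
    gcongr
  have hcond : Subsingleton E ∨ c < ‖((ContinuousLinearEquiv.refl ℝ E).symm : E →L[ℝ] E)‖₊⁻¹ := by
    rcases subsingleton_or_nontrivial E with h | h
    · exact Or.inl h
    · right
      have : ‖((ContinuousLinearEquiv.refl ℝ E).symm : E →L[ℝ] E)‖₊ = 1 := by
        ext; exact ContinuousLinearMap.norm_id
      rw [this]; simpa using hc2
  have hfa' : ApproximatesLinearOn f ((ContinuousLinearEquiv.refl ℝ E) : E →L[ℝ] E) Set.univ c :=
    hfa Set.univ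
  have hsurj : Function.Surjective f := hfa'.surjective hcond
  have hinj : Function.Injective f := (hfa'.toHomeomorph f hcond).injective
  have hfB : ∀ x ∉ B, f x = x := fun x hx => by simp [hf, hgB x hx]
  have himg : f '' B = B := by
    ext y; constructor
    · rintro ⟨x, hx, rfl⟩
      by_contra h
      have := hinj (hfB _ h)
      rw [this] at h; exact h hx
    · intro hy
      obtain ⟨x, rfl⟩ := hsurj y
      by_cases hx : x ∈ B
      · exact ⟨x, hx, rfl⟩
      · rw [hfB x hx] at hy; exact absurd hy hx
  have hD := hg.ae_differentiableAt (μ := μ)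
  set D := {x | DifferentiableAt ℝ g x} with hDdef
  have hDm : MeasurableSet D := measurableSet_of_differentiableAt ℝ g
  have hnull : μ (f '' (B ∩ Dᶜ)) = 0 := by
    have := hc1 (B ∩ Dᶜ) f (hfa _)
    have h0 : μ (B ∩ Dᶜ) = 0 := measure_mono_null Set.inter_subset_right hD
    rw [h0, mul_zero] at this
    exact le_antisymm this bot_le
  have hmeas : μ (f '' (B ∩ D)) = μ B := by
    apply le_antisymm
    · conv_rhs => rw [← himg]
      exact measure_mono (Set.image_mono Set.inter_subset_left)
    · calc μ B = μ (f '' (B ∩ D) ∪ f '' (B ∩ Dᶜ)) := by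
            rw [← Set.image_union, Set.inter_union_compl, himg]
        _ ≤ _ := measure_union_le _ _
        _ = _ := by rw [hnull, add_zero]
  have hcv := integral_image_eq_integral_abs_det_fderiv_smul μ (hB.inter hDm) (f := f)
    (f' := fun x => 1 + fderiv ℝ g x) (fun x hx =>
      ((hasFDerivAt_id x).add (hx.2 : DifferentiableAt ℝ g x).hasFDerivAt).hasFDerivWithinAt)
    hinj.injOn (fun _ => (1 : ℝ))
  have hae : (B ∩ D : Set E) =ᵐ[μ] B := by
    have : D =ᵐ[μ] (Set.univ : Set E) := by
      rw [ae_eq_univ]; exact hD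
    simpa using (ae_eq_refl B).inter this
  rw [← setIntegral_congr_set hae]
  have : ∀ x, |(1 + fderiv ℝ g x).det| = (1 + fderiv ℝ g x).det := by
    intro x
    refine abs_of_pos (hr2 ?_)
    rw [dist_eq_norm, add_sub_cancel_left]
    refine (norm_fderiv_le_of_lipschitz ℝ hg).trans_lt (lt_trans ?_ hc3)
    exact_mod_cast hL
  simp only [this, smul_eq_mul, mul_one] at hcv
  rw [← hcv]
  simp [Measure.real, hmeas]

lemma core_all (L : ℝ≥0) (g : E → E) (B : Set E) (hg : LipschitzWith L g) (hB : MeasurableSet B)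
    (hgB : ∀ x ∉ B, g x = 0) (hμ : μ.real B ≠ 0) :
    ∫ x in B, (1 + fderiv ℝ g x).det ∂μ = μ.real B := by
  obtain ⟨c, hc, H⟩ := core_small μ
  have hpos : (0 : ℝ) < c / (L + 1) := by positivity
  obtain ⟨s, hs, hcard⟩ := (Set.Ioo_infinite hpos).exists_subset_card_eq (Module.finrank ℝ E + 1)
  have key : ∀ t ∈ s, ∫ x in B, (1 + t • fderiv ℝ g x).det ∂μ = μ.real B := by
    intro t ht
    obtain ⟨h0, h1⟩ := hs ht
    have hl : LipschitzWith (‖t‖₊ * L) (t • g) := (lipschitzWith_smul t).comp hg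
    have := H _ (t • g) B ?_ hl hB (fun x hx => by simp [hgB x hx])
    · rw [← this]
      simp only [fderiv_const_smul_field]
      rfl
    · rw [← NNReal.coe_lt_coe]
      push_cast
      rw [Real.norm_of_nonneg h0.le]
      rw [lt_div_iff₀ (by positivity)] at h1
      nlinarith
  have hint : ∀ t ∈ s, IntegrableOn (fun x => (1 + t • fderiv ℝ g x).det) B μ := by
    intro t ht
    by_contra h
    exact hμ (by rw [← key t ht]; exact integral_undef h)
  simp_rw [fun x => det_interp s (by omega) (fderiv ℝ g x)]
  rw [integral_finsetSum _ (fun t ht => (hint t ht).const_mul _)]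
  simp_rw [integral_const_mul]
  rw [Finset.sum_congr rfl (fun t ht => by rw [key t ht]), ← Finset.sum_mul,
    ← Polynomial.eval_finsetSum, Lagrange.sum_basis Function.injective_id.injOn
      (Finset.card_pos.1 (by omega))]
  simp

end core

section br
variable {E : Type*} [NormedAddCommGroup E]

noncomputable def radP [NormedSpace ℝ E] (δ : ℝ) (z : E) : E := (max δ ‖z‖)⁻¹ • z

lemma radP_norm_le [NormedSpace ℝ E] {δ : ℝ} (hδ : 0 < δ) (z : E) : ‖radP δ z‖ ≤ 1 := by
  have : 0 < max δ ‖z‖ := lt_max_of_lt_left hδ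
  rw [radP, norm_smul, norm_inv, Real.norm_of_nonneg this.le, inv_mul_le_iff₀ this, mul_one]
  exact le_max_right _ _

lemma radP_lip [NormedSpace ℝ E] {δ : ℝ} (hδ : 0 < δ) :
    LipschitzWith (Real.toNNReal (2 / δ)) (radP δ : E → E) := by
  refine LipschitzWith.of_dist_le_mul fun z w => ?_
  rw [Real.coe_toNNReal _ (by positivity), dist_eq_norm, dist_eq_norm]
  have hz : 0 < max δ ‖z‖ := lt_max_of_lt_left hδ
  have hw : 0 < max δ ‖w‖ := lt_max_of_lt_left hδ
  have e : radP δ z - radP δ w = (max δ ‖z‖)⁻¹ • ((z - w)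
      + (max δ ‖w‖ - max δ ‖z‖) • radP δ w) := by
    have h2 : (max δ ‖w‖) • radP δ w = w := by
      rw [radP, smul_smul, mul_inv_cancel₀ hw.ne', one_smul]
    have h3 : (max δ ‖z‖)⁻¹ • (max δ ‖z‖) • radP δ w = radP δ w := by
      rw [smul_smul, inv_mul_cancel₀ hz.ne', one_smul]
    rw [sub_smul, h2, sub_add_sub_cancel, smul_sub, h3]; rfl
  have hm : |max δ ‖w‖ - max δ ‖z‖| ≤ ‖z - w‖ := by
    rw [max_comm δ, max_comm δ]
    refine (abs_max_sub_max_le_abs _ _ _).trans ?_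
    rw [norm_sub_rev]; exact abs_norm_sub_norm_le w z
  rw [e, norm_smul, norm_inv, Real.norm_of_nonneg hz.le, div_eq_inv_mul, mul_assoc]
  gcongr
  · exact le_max_left _ _
  · refine (norm_add_le _ _).trans ?_
    rw [norm_smul, Real.norm_eq_abs]
    nlinarith [radP_norm_le hδ w, abs_nonneg (max δ ‖w‖ - max δ ‖z‖), norm_nonneg (radP δ w)]

theorem lip_brouwer [InnerProductSpace ℝ E] [FiniteDimensional ℝ E] (T : E → E) (L : ℝ≥0)
    (hT : LipschitzOnWith L T (closedBall 0 1))
    (hm : ∀ x, ‖x‖ ≤ 1 → ‖T x‖ ≤ 1) : ∃ x, ‖x‖ ≤ 1 ∧ T x = x := by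
  by_contra! hno
  borelize E
  set T' : E → E := fun x => T (radP 1 x) with hT'
  have hT'l : ∃ L', LipschitzWith L' T' := by
    refine ⟨L * (Real.toNNReal (2 / 1)), ?_⟩
    rw [← lipschitzOnWith_univ]
    refine hT.comp (radP_lip one_pos).lipschitzOnWith ?_
    intro x _
    simpa using radP_norm_le one_pos x
  have hT'b : ∀ x, ‖T' x‖ ≤ 1 := fun x => hm _ (radP_norm_le one_pos x)
  obtain ⟨L', hL'⟩ := hT'l
  set φ : E → ℝ := fun x => max 0 (min 1 (2 - ‖x‖)) with hφ
  have hφ0 : ∀ x, 0 ≤ φ x := fun x => le_max_left _ _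
  have hφ1 : ∀ x, φ x ≤ 1 := fun x => max_le zero_le_one (min_le_left _ _)
  have hφl : LipschitzWith 1 φ := by
    refine LipschitzWith.const_max (LipschitzWith.const_min ?_ 1) 0
    refine LipschitzWith.of_dist_le_mul fun x y => ?_
    rw [Real.dist_eq, dist_eq_norm, NNReal.coe_one, one_mul, sub_sub_sub_cancel_left, norm_sub_rev]
    exact abs_norm_sub_norm_le y x
  set H : E → E := fun x => x - φ x • T' x with hH
  have hHl : ∃ M, LipschitzWith M H := by
    refine ⟨1 + (1 + L'), LipschitzWith.id.sub (LipschitzWith.of_dist_le_mul fun x y => ?_)⟩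
    rw [dist_eq_norm]
    have : φ x • T' x - φ y • T' y = (φ x - φ y) • T' x + φ y • (T' x - T' y) := by
      module
    rw [this]
    refine (norm_add_le _ _).trans ?_
    rw [norm_smul, norm_smul, Real.norm_of_nonneg (hφ0 y)]
    have h1 := hφl.norm_sub_le x y
    have h2 := hL'.norm_sub_le x y
    have h3 : ‖φ x - φ y‖ * ‖T' x‖ ≤ ‖φ x - φ y‖ * 1 := by gcongr; exact hT'b x
    have h4 : φ y * ‖T' x - T' y‖ ≤ 1 * ‖T' x - T' y‖ := by gcongr; exact hφ1 y
    rw [dist_eq_norm]; push_cast at *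
    linarith
  obtain ⟨M, hM⟩ := hHl
  have hHout : ∀ x, 2 ≤ ‖x‖ → H x = x := by
    intro x hx
    have : φ x = 0 := by
      simp only [hφ]; exact max_eq_left ((min_le_right _ _).trans (by linarith))
    simp [hH, this]
  have hHne : ∀ x, H x ≠ 0 := by
    intro x hx
    have hx' : x = φ x • T' x := sub_eq_zero.1 hx
    have hx1 : ‖x‖ ≤ 1 := by
      rw [hx', norm_smul, Real.norm_of_nonneg (hφ0 x)]
      nlinarith [hφ0 x, hφ1 x, hT'b x, norm_nonneg (T' x)]
    have : φ x = 1 := by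
      simp only [hφ]; rw [min_eq_left (by linarith)]; simp
    rw [this, one_smul] at hx'
    apply hno x hx1
    have h5 : radP 1 x = x := by simp [radP, max_eq_left hx1]
    simpa [hT', h5] using hx'.symm
  have hδ : ∃ δ : ℝ, 0 < δ ∧ δ ≤ 2 ∧ ∀ x, δ ≤ ‖H x‖ := by
    obtain ⟨x0, hx0, hmin⟩ := (isCompact_closedBall (0 : E) 2).exists_isMinOn
      ⟨0, by simp⟩ (hM.continuous.norm.continuousOn)
    refine ⟨min 2 ‖H x0‖, lt_min two_pos (norm_pos_iff.2 (hHne x0)), min_le_left _ _, fun x => ?_⟩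
    rcases le_total ‖x‖ 2 with h | h
    · exact (min_le_right _ _).trans (hmin (by simpa using h))
    · rw [hHout x h]; exact (min_le_left _ _).trans h
  obtain ⟨δ, hδ0, hδ2, hδ⟩ := hδ
  set g : E → E := fun x => (2 : ℝ) • radP δ (H x) - (2 : ℝ) • radP 2 x with hg
  have hgl : LipschitzWith _ g :=
    ((lipschitzWith_smul (2 : ℝ)).comp ((radP_lip hδ0).comp hM)).sub
      ((lipschitzWith_smul (2 : ℝ)).comp (radP_lip two_pos))
  have hgB : ∀ x ∉ ball (0 : E) 2, g x = 0 := by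
    intro x hx
    have hx : 2 ≤ ‖x‖ := by simpa using hx
    simp [hg, hHout x hx, radP, max_eq_right hx, max_eq_right (hδ2.trans hx)]
  have hpos : (volume : Measure E).real (ball 0 2) ≠ 0 :=
    (ENNReal.toReal_pos (measure_ball_pos _ _ two_pos).ne' measure_ball_lt_top.ne).ne'
  have hmain := core_all (volume : Measure E) _ g (ball 0 2) hgl measurableSet_ball hgB hpos
  apply hpos
  rw [← hmain]
  have hD := hgl.ae_differentiableAt (μ := (volume : Measure E))
  rw [← integral_zero E ℝ (μ := volume.restrict (ball (0 : E) 2))]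
  refine setIntegral_congr_ae measurableSet_ball ?_
  filter_upwards [hD] with x hx hxB
  by_contra hdet
  have hK : ∀ y ∈ ball (0 : E) 2, ‖y + g y‖ ^ 2 = 4 := by
    intro y hy
    have hy : ‖y‖ ≤ 2 := by simpa using (mem_ball.1 hy).le
    have e : y + g y = (2 : ℝ) • radP δ (H y) := by
      have : (2 : ℝ) • radP 2 y = y := by
        simp [radP, max_eq_left hy]
      simp only [hg]; rw [this]; abel
    have hHy : 0 < ‖H y‖ := norm_pos_iff.2 (hHne y)
    have : ‖radP δ (H y)‖ = 1 := by
      rw [radP, max_eq_right (hδ y), norm_smul, norm_inv, norm_norm, inv_mul_cancel₀ hHy.ne']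
    rw [e, norm_smul, this]; norm_num
  have hd1 := ((hasFDerivAt_id x).add hx.hasFDerivAt).norm_sq
  have hd2 : HasFDerivAt (fun y => ‖((id : E → E) + g) y‖ ^ 2) (0 : E →L[ℝ] ℝ) x := by
    refine (hasFDerivAt_const (4 : ℝ) x).congr_of_eventuallyEq ?_
    filter_upwards [isOpen_ball.mem_nhds hxB] with y hy
    exact hK y hy
  have heq := hd1.unique hd2
  let e := LinearMap.equivOfDetNeZero ((1 + fderiv ℝ g x : E →L[ℝ] E) : E →ₗ[ℝ] E) hdet
  obtain ⟨v, hv⟩ := e.surjective (x + g x)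
  have hv' : v + fderiv ℝ g x v = x + g x := hv
  have h6 := congrArg (fun l : E →L[ℝ] ℝ => l v) heq
  simp [-map_add] at h6
  rw [← mul_add, ← inner_add_right, hv', real_inner_self_eq_norm_sq, hK x hxB] at h6
  norm_num at h6

end br

lemma unif_small {X Y : Type*} [PseudoMetricSpace X] [SeminormedAddCommGroup Y] (Q : ℝ → X → Y) (l : Filter ℝ)
    (M : ℝ≥0) (s : Set X) (hs : IsCompact s) (hQ : ∀ᶠ α in l, LipschitzOnWith M (Q α) s)
    (h0 : ∀ x ∈ s, Tendsto (fun α => Q α x) l (𝓝 0)) (ε : ℝ) (hε : 0 < ε) :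
    ∀ᶠ α in l, ∀ x ∈ s, ‖Q α x‖ ≤ ε := by
  obtain ⟨t, hts, htf, hcov⟩ := hs.finite_cover_balls (e := ε / 2 / (M + 1)) (by positivity)
  have h1 : ∀ᶠ α in l, ∀ y ∈ t, ‖Q α y‖ < ε / 2 := by
    rw [eventually_all_finite htf]
    intro y hy
    exact (tendsto_zero_iff_norm_tendsto_zero.1 (h0 y (hts hy))).eventually (gt_mem_nhds (by positivity))
  filter_upwards [h1, hQ] with α ha hl x hx
  obtain ⟨y, hy, hxy⟩ := Set.mem_iUnion₂.1 (hcov hx)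
  have h3 := ha y hy
  rw [mem_ball, lt_div_iff₀ (by positivity)] at hxy
  have h4 : ‖Q α x‖ ≤ ‖Q α x - Q α y‖ + ‖Q α y‖ := by
    simpa using norm_add_le (Q α x - Q α y) (Q α y)
  have h5 : dist (Q α x) (Q α y) ≤ M * dist x y := hl.dist_le_mul x hx y (hts hy)
  rw [dist_eq_norm] at h5
  have := dist_nonneg (x := x) (y := y)
  nlinarith

theorem stmt_13 (m n : ℕ) (C : Set (Fin m → ℝ)) (hCconv : Convex ℝ C)
    (hCint : (interior C).Nonempty) (h0C : (0 : Fin m → ℝ) ∈ C)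
    (F : (Fin m → ℝ) → (Fin n → ℝ)) (LF : ℝ≥0) (hLip : LipschitzOnWith LF F C)
    (hF0 : F 0 = 0) (dF : (Fin m → ℝ) →ₗ[ℝ] (Fin n → ℝ))
    (hdiff : ∀ x ∈ C, Tendsto (fun α : ℝ => α⁻¹ • F (α • x)) (nhdsWithin 0 (Set.Ioi 0))
      (nhds (dF x)))
    (hsurj : dF '' {y | ∃ c : ℝ, 0 ≤ c ∧ ∃ x ∈ C, y = c • x} = Set.univ) :
    ∀ V ∈ nhds (0 : Fin m → ℝ), (0 : Fin n → ℝ) ∈ interior (F '' (V ∩ C)) := by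
  intro V hV
  -- an interior point of `C` in the kernel
  obtain ⟨z, hz, hz0⟩ : ∃ z ∈ interior C, dF z = 0 := by
    obtain ⟨p, hp⟩ := hCint
    have : -dF p ∈ dF '' {y | ∃ c : ℝ, 0 ≤ c ∧ ∃ x ∈ C, y = c • x} := by rw [hsurj]; trivial
    obtain ⟨_, ⟨c, hc, x, hx, rfl⟩, h⟩ := this
    refine ⟨(1 + c)⁻¹ • p + ((1 + c)⁻¹ * c) • x, hCconv.combo_interior_self_mem_interior hp hx
      (by positivity) (by positivity) (by field_simp), ?_⟩
    rw [mul_smul, ← smul_add, map_smul, map_add, h]; simp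
  have hdFs : Function.Surjective dF := fun y => by
    have : y ∈ dF '' {y | ∃ c : ℝ, 0 ≤ c ∧ ∃ x ∈ C, y = c • x} := by rw [hsurj]; trivial
    obtain ⟨x, _, h⟩ := this
    exact ⟨x, h⟩
  obtain ⟨S0, hS0⟩ := dF.exists_rightInverse_of_surjective (LinearMap.range_eq_top.2 hdFs)
  let E := EuclideanSpace ℝ (Fin n)
  let e : E ≃L[ℝ] (Fin n → ℝ) := EuclideanSpace.equiv (Fin n) ℝ
  let S : E →L[ℝ] (Fin m → ℝ) := (LinearMap.toContinuousLinearMap S0).comp (e : E →L[ℝ] (Fin n → ℝ))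
  have hS : ∀ u, dF (S u) = e u := fun u => LinearMap.congr_fun hS0 (e u)
  obtain ⟨r, hr, hrC⟩ : ∃ r : ℝ, 0 < r ∧ ∀ u : E, ‖u‖ ≤ 1 → z + S (r • u) ∈ C := by
    have hc : ContinuousAt (fun u : E => z + S u) 0 := by fun_prop
    have : ∀ᶠ u in 𝓝 (0 : E), z + S u ∈ C :=
      hc.eventually (by simpa using mem_interior_iff_mem_nhds.1 hz)
    obtain ⟨r, hr, h⟩ := Metric.eventually_nhds_iff.1 this
    refine ⟨r / 2, by positivity, fun u hu => h ?_⟩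
    rw [dist_zero_right, norm_smul, Real.norm_of_nonneg (by positivity)]
    nlinarith
  let A : E → (Fin m → ℝ) := fun u => z + S (r • u)
  have hAl : LipschitzWith (‖S‖₊ * ‖r‖₊) A := by
    have := (LipschitzWith.const z).add (S.lipschitz.comp (lipschitzWith_smul (α := ℝ) (β := E) r))
    rw [zero_add] at this
    exact this
  have hαC : ∀ α : ℝ, 0 < α → α ≤ 1 → ∀ x ∈ C, α • x ∈ C := fun α h0 h1 x hx =>
    hCconv.smul_mem_of_zero_mem h0C hx ⟨h0.le, h1⟩
  let G : ℝ → E → E := fun α u => α⁻¹ • e.symm (F (α • A u))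
  let K : ℝ≥0 := ‖(e.symm : (Fin n → ℝ) →L[ℝ] E)‖₊ * (LF * (‖S‖₊ * ‖r‖₊))
  have hGl : ∀ α : ℝ, 0 < α → α ≤ 1 → LipschitzOnWith K (G α) (closedBall 0 1) := by
    intro α h0 h1
    refine LipschitzOnWith.of_dist_le_mul fun u hu v hv => ?_
    have hu' : α • A u ∈ C := hαC α h0 h1 _ (hrC u (by simpa using hu))
    have hv' : α • A v ∈ C := hαC α h0 h1 _ (hrC v (by simpa using hv))
    have a1 := hLip.dist_le_mul _ hu' _ hv'
    have a2 := hAl.dist_le_mul u v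
    have a3 := (e.symm : (Fin n → ℝ) →L[ℝ] E).lipschitz.dist_le_mul (F (α • A u)) (F (α • A v))
    rw [dist_smul₀, Real.norm_of_nonneg h0.le] at a1
    simp only [G]
    rw [dist_smul₀, norm_inv, Real.norm_of_nonneg h0.le, inv_mul_le_iff₀ h0]
    refine a3.trans ?_
    calc _ ≤ (‖(e.symm : (Fin n → ℝ) →L[ℝ] E)‖₊ : ℝ) * (LF * (α * ((‖S‖₊ * ‖r‖₊ : ℝ≥0) * dist u v))) := by
          gcongr
          exact a1.trans (by gcongr)
      _ = _ := by simp only [K]; push_cast; ring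
  have hsm : ∀ᶠ α : ℝ in 𝓝[>] 0, 0 < α ∧ α ≤ 1 :=
    eventually_mem_nhdsWithin.and (nhdsWithin_le_nhds (ge_mem_nhds one_pos))
  have hU := unif_small (fun α u => G α u - r • u) (𝓝[>] 0) (K + ‖r‖₊) (closedBall (0 : E) 1)
    (isCompact_closedBall _ _)
    (hsm.mono fun α h => (hGl α h.1 h.2).sub (lipschitzWith_smul (α := ℝ) (β := E) r).lipschitzOnWith)
    (by
      intro u hu
      have h := (e.symm.continuous.tendsto _).comp (hdiff (A u) (hrC u (by simpa using hu)))
      have h2 : e.symm (dF (A u)) = r • u := by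
        simp only [A]; rw [map_add, hz0, hS, zero_add, e.symm_apply_apply]
      rw [h2] at h
      have h3 := h.sub_const (r • u)
      rw [sub_self] at h3
      refine h3.congr fun α => ?_
      simp [G]) (r / 2) (by positivity)
  have hVe := unif_small (fun α u => α • A u) (𝓝[>] 0) (‖S‖₊ * ‖r‖₊) (closedBall (0 : E) 1)
    (isCompact_closedBall _ _)
    (hsm.mono fun α h => by
      have h1 := ((lipschitzWith_smul (α := ℝ) (β := Fin m → ℝ) α).comp hAl)
      refine (h1.weaken ?_).lipschitzOnWith
      refine mul_le_of_le_one_left bot_le ?_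
      rw [← NNReal.coe_le_coe]; simpa [abs_of_pos h.1] using h.2)
    (by
      intro u _
      have : Tendsto (fun α : ℝ => α • A u) (𝓝 0) (𝓝 ((0 : ℝ) • A u)) :=
        tendsto_id.smul_const _
      rw [zero_smul] at this
      exact this.mono_left nhdsWithin_le_nhds)
  obtain ⟨η, hη, hηV⟩ := Metric.nhds_basis_closedBall.mem_iff.1 hV
  obtain ⟨α, ⟨hα0, hα1⟩, hα2, hα3⟩ := (hsm.and (hU.and (hVe η hη))).exists
  rw [mem_interior_iff_mem_nhds]
  have hw : ∀ᶠ w in 𝓝 (0 : Fin n → ℝ), ‖e.symm w‖ < α * (r / 2) := by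
    have : ContinuousAt (fun w => ‖e.symm w‖) 0 := by fun_prop
    exact this.eventually (gt_mem_nhds (by simp; positivity))
  filter_upwards [hw] with w hw
  obtain ⟨u, hu, hfix⟩ := lip_brouwer (fun u : E => u - r⁻¹ • (G α u - α⁻¹ • e.symm w))
    (1 + ‖r⁻¹‖₊ * (K + 0))
    (LipschitzWith.id.lipschitzOnWith.sub
      ((lipschitzWith_smul (α := ℝ) (β := E) r⁻¹).comp_lipschitzOnWith
        ((hGl α hα0 hα1).sub (LipschitzWith.const _).lipschitzOnWith)))
    (by
      intro u hu
      have b1 := hα2 u (by simpa using hu)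
      have : u - r⁻¹ • (G α u - α⁻¹ • e.symm w)
          = r⁻¹ • (α⁻¹ • e.symm w - (G α u - r • u)) := by
        simp only [smul_sub, smul_smul, inv_mul_cancel₀ hr.ne', one_smul]; abel
      have b2 : ‖α⁻¹ • e.symm w‖ ≤ r / 2 := by
        rw [norm_smul, norm_inv, Real.norm_of_nonneg hα0.le, inv_mul_le_iff₀ hα0]; exact hw.le
      rw [this, norm_smul, norm_inv, Real.norm_of_nonneg hr.le, inv_mul_le_iff₀ hr]
      refine (norm_sub_le _ _).trans ?_
      linarith)
  refine ⟨α • A u, ⟨hηV (by simpa using hα3 u (by simpa using hu)), hαC α hα0 hα1 _ (hrC u hu)⟩, ?_⟩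
  have h1 : r⁻¹ • (G α u - α⁻¹ • e.symm w) = 0 := sub_eq_self.1 hfix
  rw [smul_eq_zero_iff_right (inv_ne_zero hr.ne'), ← smul_sub,
    smul_eq_zero_iff_right (inv_ne_zero hα0.ne'), sub_eq_zero] at h1
  exact e.symm.injective h1
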